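/- If G is a connected chordal graph with a minimal tree representation T, then either G is a complete graph or lpt(G) ≤ mf(T), where for a tree T on at least 2 vertices, mf(T) is the maximum over all edges e ∈ E(T) of the minimum number of leaves of T contained in a component of T − e. -/

import Mathlib

open SimpleGraph

/-- A graph is chordal if every cycle on at least 4 vertices has a chord
(an edge of the graph joining two vertices of the cycle that is not an edge of the cycle). -/
def IsChordal {V : Type} (G : SimpleGraph V) : Prop :=
  ∀ (v : V) (c : G.Walk v v), c.IsCycle → 4 ≤ c.length →
    ∃ a b : V, a ∈ c.support ∧ b ∈ c.support ∧ G.Adj a b ∧ s(a, b) ∉ c.edges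

/-- A tree representation of `G` with host tree `T`: each vertex `u` of `G` gets a
nonempty subtree `S u` of `T`, and distinct vertices are adjacent iff their subtrees meet. -/
structure TreeRep {V W : Type} (G : SimpleGraph V) (T : SimpleGraph W) : Type where
  isTree : T.IsTree
  S : V → Set W
  subtree_connected : ∀ u : V, (T.induce (S u)).Connected
  adj_iff : ∀ u v : V, u ≠ v → (G.Adj u v ↔ (S u ∩ S v).Nonempty)

/-- A tree representation is minimal if no tree representation of `G` has a host tree
with fewer vertices. -/
def TreeRep.IsMinimal {V W : Type} [Fintype W] {G : SimpleGraph V} {T : SimpleGraph W}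
    (_R : TreeRep G T) : Prop :=
  ∀ (W' : Type) [Fintype W'] (T' : SimpleGraph W'),
    Nonempty (TreeRep G T') → Fintype.card W ≤ Fintype.card W'

/-- The bag of a host tree vertex `x`. -/
def TreeRep.bag {V W : Type} {G : SimpleGraph V} {T : SimpleGraph W}
    (R : TreeRep G T) (x : W) : Set V :=
  {u : V | x ∈ R.S u}

/-- In `T` rooted at `r`, the (vertex set of the) subtree rooted at `x`: all vertices `w`
such that the `r`–`w` path contains `x`. -/
def rootedSubtree {W : Type} (T : SimpleGraph W) (r x : W) : Set W :=
  {w : W | ∀ p : T.Walk r w, p.IsPath → x ∈ p.support}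

/-- The core of a subgraph `H` of `G`: the union over edges `uv` of `H` of `V(S u ∩ S v)`,
a set of host-tree vertices. -/
def TreeRep.core {V W : Type} {G : SimpleGraph V} {T : SimpleGraph W}
    (R : TreeRep G T) (H : G.Subgraph) : Set W :=
  {t : W | ∃ u v : V, H.Adj u v ∧ t ∈ R.S u ∧ t ∈ R.S v}

/-- `C` is a connected component of the subgraph of `T` induced on the vertex set `s`. -/
def IsCompOf {W : Type} (T : SimpleGraph W) (s C : Set W) : Prop :=
  C.Nonempty ∧ C ⊆ s ∧ (T.induce C).Connected ∧
    ∀ ⦃a b : W⦄, a ∈ C → b ∈ s → T.Adj a b → b ∈ C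

/-- A graph is 2-connected if it has more than 2 vertices and deleting any one vertex
leaves it connected. -/
def TwoConnected {V : Type} (G : SimpleGraph V) : Prop :=
  2 < Nat.card V ∧ ∀ v : V, (G.induce {v}ᶜ).Connected

/-- `G` is `k`-connected: more than `k` vertices, and deleting fewer than `k` vertices
leaves it connected. -/
def IsKConnectedGraph {V : Type} (G : SimpleGraph V) (k : ℕ) : Prop :=
  k < Nat.card V ∧ ∀ s : Set V, s.Finite → s.ncard < k → (G.induce sᶜ).Connected

/-- The vertex connectivity `κ(G)`: the maximum `k` such that `G` is `k`-connected. -/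
noncomputable def vertexConnectivity {V : Type} (G : SimpleGraph V) : ℕ :=
  sSup {k : ℕ | IsKConnectedGraph G k}

/-- `p` is a path of maximum length in `G`. -/
def IsLongestPath {V : Type} (G : SimpleGraph V) {a b : V} (p : G.Walk a b) : Prop :=
  p.IsPath ∧ ∀ (c d : V) (q : G.Walk c d), q.IsPath → q.length ≤ p.length

/-- `c` is a cycle of maximum length in `G`. -/
def IsLongestCycle {V : Type} (G : SimpleGraph V) {a : V} (c : G.Walk a a) : Prop :=
  c.IsCycle ∧ ∀ (d : V) (q : G.Walk d d), q.IsCycle → q.length ≤ c.length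

/-- The longest path transversal number of `G`: the least size of a set of vertices
meeting every longest path. -/
noncomputable def lpt {V : Type} (G : SimpleGraph V) : ℕ :=
  sInf {k : ℕ | ∃ A : Set V, A.Finite ∧ A.ncard = k ∧
    ∀ (a b : V) (p : G.Walk a b), IsLongestPath G p → ∃ v ∈ A, v ∈ p.support}

/-- The longest cycle transversal number of `G`: the least size of a set of vertices
meeting every longest cycle. -/
noncomputable def lct {V : Type} (G : SimpleGraph V) : ℕ :=
  sInf {k : ℕ | ∃ A : Set V, A.Finite ∧ A.ncard = k ∧
    ∀ (a : V) (c : G.Walk a a), IsLongestCycle G c → ∃ v ∈ A, v ∈ c.support}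

/-- `DQX T q X Q0`: the union, over `y ∈ Q0`, of the component of `X − E(Q)` containing
`y` (all vertices joined to some `y ∈ Q0` by a walk inside `X` avoiding the edges of `q`). -/
def DQX {W : Type} (T : SimpleGraph W) {x z : W} (q : T.Walk x z) (X : Set W)
    (Q0 : Set W) : Set W :=
  {w : W | ∃ y ∈ Q0, ∃ d : (T.deleteEdges {e : Sym2 W | e ∈ q.edges}).Walk y w,
    ∀ a ∈ d.support, a ∈ X}

/-- Cutter can force the Cutter–Chooser game from position `(X, x)` (a subtree `X` of the
host tree, rooted at `x`) to end within `t` rounds: Cutter picks `z ∈ X` and cuts along the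
`x`–`z` path `Q` in `X`; either `X = Q` (game over), or for every component `X'` of
`X − V(Q)` (with its root `x'`, the vertex of `X'` adjacent to `Q`) that Chooser may pick,
Cutter wins within `t - 1` further rounds. -/
def cutterWins {W : Type} (T : SimpleGraph W) : ℕ → Set W → W → Prop
  | 0, _, _ => False
  | t + 1, X, x =>
      ∃ z ∈ X, ∃ p : T.Walk x z, p.IsPath ∧ (∀ w ∈ p.support, w ∈ X) ∧
        (X = {w : W | w ∈ p.support} ∨
          ∀ (X' : Set W) (x' : W), IsCompOf T (X \ {w : W | w ∈ p.support}) X' →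
            x' ∈ X' → (∃ u ∈ p.support, T.Adj u x') → cutterWins T t X' x')

/-- `ccg(X, x)`: the number of rounds of the Cutter–Chooser game on the subtree `X` of the
host tree rooted at `x`, under optimal play. -/
noncomputable def ccgOn {W : Type} (T : SimpleGraph W) (X : Set W) (x : W) : ℕ :=
  sInf {t : ℕ | cutterWins T t X x}

/-- `ccg(T)`: the minimum over roots `r` of `ccg(T, r)`. -/
noncomputable def ccg {W : Type} (T : SimpleGraph W) : ℕ :=
  sInf (Set.range fun r : W => ccgOn T Set.univ r)

/-- A subdivided caterpillar: a tree having a (spine) path containing every vertex of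
degree at least 3. -/
def IsSubdividedCaterpillar {W : Type} (T : SimpleGraph W) : Prop :=
  T.IsTree ∧ ∃ (a b : W) (q : T.Walk a b), q.IsPath ∧
    ∀ v : W, 3 ≤ (T.neighborSet v).ncard → v ∈ q.support

/-- A subdivided star: a tree with at most one vertex of degree at least 3. -/
def IsSubdividedStar {W : Type} (T : SimpleGraph W) : Prop :=
  T.IsTree ∧ ∀ v w : W, 3 ≤ (T.neighborSet v).ncard → 3 ≤ (T.neighborSet w).ncard → v = w

/-- A leaf: a vertex of degree 1. -/
def IsLeaf {W : Type} (T : SimpleGraph W) (v : W) : Prop := (T.neighborSet v).ncard = 1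

/-- `mf T`: the maximum over edges `e` of `T` of the minimum number of leaves of `T`
contained in a component of `T − e`. -/
noncomputable def mf {W : Type} (T : SimpleGraph W) : ℕ :=
  sSup {k : ℕ | ∃ u v : W, T.Adj u v ∧
    k = min {w : W | IsLeaf T w ∧ (T.deleteEdges {s(u, v)}).Reachable u w}.ncard
            {w : W | IsLeaf T w ∧ (T.deleteEdges {s(u, v)}).Reachable v w}.ncard}

/-- In `T` rooted at `r`, `v` is a child of `u`. -/
def IsChildIn {W : Type} (T : SimpleGraph W) (r u v : W) : Prop :=
  T.Adj u v ∧ ∀ p : T.Walk r v, p.IsPath → u ∈ p.support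

/-- In `T` rooted at `r`, `u` is childless. -/
def IsChildlessIn {W : Type} (T : SimpleGraph W) (r u : W) : Prop :=
  ¬ ∃ v : W, IsChildIn T r u v

/-! ### Paths as lists -/

/-- A path in `G`, as a list of vertices. -/
def PList {V : Type} (G : SimpleGraph V) (l : List V) : Prop :=
  l.IsChain G.Adj ∧ l.Nodup

/-- A longest path in `G`, as a list of vertices. -/
def LPList {V : Type} (G : SimpleGraph V) (l : List V) : Prop :=
  PList G l ∧ ∀ l', PList G l' → l'.length ≤ l.length

lemma lpList_of_isLongestPath {V : Type} {G : SimpleGraph V} {a b : V} {p : G.Walk a b}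
    (h : IsLongestPath G p) : LPList G p.support := by
  refine ⟨⟨p.isChain_adj_support, h.1.support_nodup⟩, ?_⟩
  intro l' hl'
  by_cases hne : l' = []
  · simp [hne]
  · have h1 := h.2 _ _ (Walk.ofSupport l' hne hl'.1)
      (by rw [Walk.isPath_def, Walk.support_ofSupport]; exact hl'.2)
    have h2 : (Walk.ofSupport l' hne hl'.1).support.length = l'.length := by
      rw [Walk.support_ofSupport]
    rw [Walk.length_support] at h2 ⊢
    omega

lemma LPList.ne_nil {V : Type} [Nonempty V] {G : SimpleGraph V} {l : List V}
    (h : LPList G l) : l ≠ [] := by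
  rintro rfl
  have := h.2 [Classical.arbitrary V] ⟨List.isChain_singleton _, by simp⟩
  simp at this

lemma PList.reverse {V : Type} {G : SimpleGraph V} {l : List V} (h : PList G l) :
    PList G l.reverse := by
  refine ⟨?_, by simpa using h.2⟩
  rw [List.isChain_reverse]
  exact h.1.imp fun _ _ h => h.symm

/-- Any path through `p` contains a path ending at `p` with at least half the vertices. -/
lemma PList.half {V : Type} {G : SimpleGraph V} {l : List V} (h : PList G l) {p : V}
    (hp : p ∈ l) : ∃ X : List V, PList G (X ++ [p]) ∧ (∀ x ∈ X, x ∈ l) ∧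
      l.length + 1 ≤ 2 * (X.length + 1) := by
  obtain ⟨A, B, rfl⟩ := List.append_of_mem hp
  have hA : PList G (A ++ [p]) := by
    refine ⟨(List.isChain_split.1 h.1).1, ?_⟩
    have := h.2
    grind
  have hB : PList G (p :: B) := by
    refine ⟨(List.isChain_split.1 h.1).2, ?_⟩
    have := h.2
    grind
  by_cases hc : B.length ≤ A.length
  · exact ⟨A, hA, by simp; tauto, by simp; omega⟩
  · refine ⟨B.reverse, by simpa using hB.reverse, by simp; tauto, by simp; omega⟩

lemma exists_dup_split {V : Type} : ∀ R : List V, ¬ R.Nodup →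
    ∃ A x B C, R = A ++ x :: (B ++ x :: C)
  | [], h => by simp at h
  | a :: R, h => by
    by_cases ha : a ∈ R
    · obtain ⟨B, C, rfl⟩ := List.append_of_mem ha
      exact ⟨[], a, B, C, rfl⟩
    · obtain ⟨A, x, B, C, h⟩ := exists_dup_split R (by
        intro hR
        exact h (List.nodup_cons.2 ⟨ha, hR⟩))
      exact ⟨a :: A, x, B, C, by rw [h]; rfl⟩

lemma exists_connector {V : Type} {G : SimpleGraph V} {P Q : List V} {a b : V}
    (w : G.Walk a b) (ha : a ∈ P) (hb : b ∈ Q) (hd : ∀ x ∈ P, x ∉ Q) :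
    ∃ p q : V, ∃ R : List V, p ∈ P ∧ q ∈ Q ∧ (p :: (R ++ [q])).IsChain G.Adj ∧ R.Nodup ∧
      ∀ x ∈ R, x ∉ P ∧ x ∉ Q := by
  classical
  have hex : ∃ n : ℕ, ∃ p q : V, ∃ R : List V, p ∈ P ∧ q ∈ Q ∧
      (p :: (R ++ [q])).IsChain G.Adj ∧ R.length = n := by
    have h1 := w.isChain_adj_support
    cases w with
    | nil => exact absurd hb (hd _ ha)
    | cons h w' =>
      refine ⟨_, a, b, w'.support.dropLast, ha, hb, ?_, rfl⟩
      have : w'.support.dropLast ++ [b] = w'.support := by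
        conv_rhs => rw [← List.dropLast_append_getLast w'.support_ne_nil, Walk.getLast_support]
      rw [this]
      simpa using h1
  obtain ⟨p, q, R, hp, hq, hch, hlen⟩ := Nat.find_spec hex
  have hmin : ∀ p q : V, ∀ R' : List V, p ∈ P → q ∈ Q →
      (p :: (R' ++ [q])).IsChain G.Adj → R.length ≤ R'.length := by
    intro p q R' hp hq h
    rw [hlen]
    exact Nat.find_min' hex ⟨p, q, R', hp, hq, h, rfl⟩
  refine ⟨p, q, R, hp, hq, hch, ?_, ?_⟩
  · by_contra hnd
    obtain ⟨A, x, B, C, rfl⟩ := exists_dup_split R hnd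
    have := hmin p q (A ++ x :: C) hp hq (by
      have h2 : (((p :: A) ++ x :: ((B ++ x :: C) ++ [q])) : List V).IsChain G.Adj := by
        simpa using hch
      have h3 : (((x :: B) ++ x :: (C ++ [q])) : List V).IsChain G.Adj := by
        simpa using (List.isChain_split.1 h2).2
      have h4 : (((p :: A) ++ x :: (C ++ [q])) : List V).IsChain G.Adj :=
        List.isChain_split.2 ⟨(List.isChain_split.1 h2).1, (List.isChain_split.1 h3).2⟩
      simpa using h4)
    simp at this
    omega
  · intro x hx
    obtain ⟨A, B, rfl⟩ := List.append_of_mem hx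
    constructor
    · intro hxP
      have := hmin x q B hxP hq (by
        have h2 : (((p :: A) ++ x :: (B ++ [q])) : List V).IsChain G.Adj := by simpa using hch
        exact (List.isChain_split.1 h2).2)
      simp at this
      omega
    · intro hxQ
      have := hmin p x A hp hxQ (by
        have h2 : (((p :: A) ++ x :: (B ++ [q])) : List V).IsChain G.Adj := by simpa using hch
        simpa using (List.isChain_split.1 h2).1)
      simp at this

lemma longest_meet {V : Type} {G : SimpleGraph V} (hG : G.Connected) {P Q : List V}
    (hP : LPList G P) (hQ : LPList G Q) : ∃ x, x ∈ P ∧ x ∈ Q := by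
  have := hG.nonempty
  by_contra hcon
  push Not at hcon
  obtain ⟨a, ha⟩ := List.exists_mem_of_ne_nil _ hP.ne_nil
  obtain ⟨b, hb⟩ := List.exists_mem_of_ne_nil _ hQ.ne_nil
  obtain ⟨w⟩ := hG.preconnected a b
  obtain ⟨p, q, R, hp, hq, hch, hnd, hdis⟩ := exists_connector w ha hb hcon
  obtain ⟨X, hX, hXP, hXl⟩ := hP.1.half hp
  obtain ⟨Y, hY, hYQ, hYl⟩ := hQ.1.half hq
  have hY' := hY.reverse
  simp only [List.reverse_append, List.reverse_cons, List.reverse_nil, List.nil_append,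
    List.singleton_append] at hY'
  have key := hP.2 (X ++ p :: (R ++ q :: Y.reverse)) ⟨?_, ?_⟩
  · have := hQ.2 _ hP.1
    have := hP.2 _ hQ.1
    simp at key
    omega
  · rw [List.isChain_split]
    refine ⟨hX.1, ?_⟩
    rw [← List.cons_append, List.isChain_split]
    exact ⟨by simpa using hch, hY'.1⟩
  · have h1 := hX.2
    have h2 := hY'.2
    have h3 : ∀ x ∈ Y.reverse, x ∈ Q := by simpa using hYQ
    generalize Y.reverse = Z at *
    rw [List.nodup_append] at h1 ⊢
    simp only [List.nodup_cons, List.nodup_append, List.mem_append, List.mem_cons] at *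
    grind

/-- Adjacent-pair lemma. -/
lemma exists_pair {V : Type} {r : V → V → Prop} {p q : V → Prop}
    (hcl : ∀ x y, r x y → q y → p x ∨ q x) {z : V} (hz : q z) :
    ∀ (Z : List V) (b : V), (b :: Z).IsChain r → z ∈ Z →
      q b ∨ ∃ U x y U', b :: Z = U ++ x :: y :: U' ∧ p x ∧ q y
  | [], _, _, h => by simp at h
  | c :: Z, b, hch, hmem => by
    have hbc : r b c := (List.isChain_cons_cons.1 hch).1
    have hq : q c ∨ ∃ U x y U', c :: Z = U ++ x :: y :: U' ∧ p x ∧ q y := by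
      rcases List.mem_cons.1 hmem with rfl | h
      · exact Or.inl hz
      · exact exists_pair hcl hz Z c (List.isChain_cons_cons.1 hch).2 h
    rcases hq with hq | ⟨U, x, y, U', h, hx, hy⟩
    · rcases hcl _ _ hbc hq with h | h
      · exact Or.inr ⟨[], b, c, Z, rfl, h, hq⟩
      · exact Or.inl h
    · exact Or.inr ⟨b :: U, x, y, U', by rw [h]; rfl, hx, hy⟩

/-- Propagation along a chain. -/
lemma chain_all {V : Type} {r : V → V → Prop} {q : V → Prop} :
    ∀ (l : List V), (∀ x y, x ∈ l → y ∈ l → r x y → (q x ↔ q y)) → l.IsChain r →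
      ∀ z ∈ l, q z → ∀ x ∈ l, q x
  | [], _, _, z, hz, _ => by simp at hz
  | [a], _, _, z, hz, h => by simp at hz; subst hz; simpa using h
  | a :: b :: l, hcl, hch, z, hz, h => by
    have hab := hcl a b (by simp) (by simp) (List.isChain_cons_cons.1 hch).1
    have ih := chain_all (b :: l) (fun x y hx hy => hcl x y (by simp [hx]) (by simp [hy]))
      (List.isChain_cons_cons.1 hch).2
    have hb : q b := by
      rcases List.mem_cons.1 hz with rfl | hz
      · exact hab.1 h
      · exact ih z hz h b (by simp)
    intro x hx
    rcases List.mem_cons.1 hx with rfl | hx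
    · exact hab.2 hb
    · exact ih b (by simp) hb x hx

lemma exists_first {V : Type} (p : V → Prop) :
    ∀ l : List V, (∃ x ∈ l, p x) → ∃ X b Z, l = X ++ b :: Z ∧ p b ∧ ∀ x ∈ X, ¬ p x
  | [], h => by simp at h
  | a :: l, h => by
    by_cases ha : p a
    · exact ⟨[], a, l, rfl, ha, by simp⟩
    · obtain ⟨X, b, Z, h1, h2, h3⟩ := exists_first p l (by
        obtain ⟨x, hx, hp⟩ := h
        rcases List.mem_cons.1 hx with rfl | hx
        · exact absurd hp ha
        · exact ⟨x, hx, hp⟩)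
      exact ⟨a :: X, b, Z, by rw [h1]; rfl, h2, by simpa [ha] using h3⟩

/-! ### Trees -/

/-- The side of `y` after deleting the edge `ty`. -/
def Side {W : Type} (T : SimpleGraph W) (t y : W) : Set W :=
  {w | (T.deleteEdges {s(t, y)}).Reachable y w}

lemma conn_closed {W : Type} {T : SimpleGraph W} {S : Set W} (hS : (T.induce S).Connected)
    {p : W → Prop} (hcl : ∀ x y, x ∈ S → y ∈ S → T.Adj x y → p x → p y) {a b : W}
    (ha : a ∈ S) (hb : b ∈ S) (hpa : p a) : p b := by
  obtain ⟨w⟩ := hS.preconnected ⟨a, ha⟩ ⟨b, hb⟩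
  have : ∀ (x y : S) (w : (T.induce S).Walk x y), p x → p y := by
    intro x y w
    induction w with
    | nil => exact id
    | cons h _ ih => exact fun hx => ih (hcl _ _ (Subtype.coe_prop _) (Subtype.coe_prop _) h hx)
  exact this _ _ w hpa

lemma self_mem_side {W : Type} {T : SimpleGraph W} (t y : W) : y ∈ Side T t y :=
  Reachable.refl _

lemma notMem_side {W : Type} {T : SimpleGraph W} (hT : T.IsTree) {t y : W} (h : T.Adj t y) :
    t ∉ Side T t y := by
  have h1 := (isAcyclic_iff_forall_adj_isBridge.1 hT.isAcyclic) h
  rw [isBridge_iff] at h1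
  exact fun h2 => h1 h2.symm

lemma side_step {W : Type} {T : SimpleGraph W} {t y w w' : W}
    (hw : w ∈ Side T t y) (ha : T.Adj w w') (hne : s(w, w') ≠ s(t, y)) : w' ∈ Side T t y := by
  refine Reachable.trans hw (Adj.reachable ?_)
  rw [deleteEdges_adj]
  exact ⟨ha, by simpa using hne⟩

lemma side_disjoint {W : Type} {T : SimpleGraph W} (hT : T.IsTree) {t y w : W} (h : T.Adj t y)
    (h1 : w ∈ Side T t y) (h2 : w ∈ Side T y t) : False := by
  apply notMem_side hT h
  have h3 : (T.deleteEdges {s(t, y)}).Reachable t w := by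
    have := h2
    rw [Side, Set.mem_ofPred_eq, Sym2.eq_swap] at this
    exact this
  exact Reachable.trans h1 h3.symm

lemma side_step' {W : Type} {T : SimpleGraph W} (hT : T.IsTree) {t y w w' : W} (h : T.Adj t y)
    (hw : w ∈ Side T t y) (ha : T.Adj w w') (hne : w' ≠ t) : w' ∈ Side T t y := by
  refine side_step hw ha ?_
  intro he
  rw [Sym2.eq_iff] at he
  rcases he with ⟨rfl, -⟩ | ⟨-, rfl⟩
  · exact notMem_side hT h hw
  · exact hne rfl

lemma side_walk {W : Type} {T : SimpleGraph W} (hT : T.IsTree) {t y : W} (h : T.Adj t y)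
    {a b : W} (p : T.Walk a b) : a ∈ Side T t y → t ∉ p.support → b ∈ Side T t y := by
  induction p with
  | nil => exact fun h _ => h
  | cons hadj p ih =>
    intro ha ht
    rw [Walk.support_cons, List.mem_cons, not_or] at ht
    refine ih (side_step' hT h ha hadj ?_) ht.2
    rintro rfl
    exact ht.2 p.start_mem_support

lemma exists_side {W : Type} {T : SimpleGraph W} (hT : T.IsTree) {t w : W} (hne : w ≠ t) :
    ∃ y, T.Adj t y ∧ w ∈ Side T t y := by
  obtain ⟨p, hp, -⟩ := hT.existsUnique_path t w
  cases p with
  | nil => exact absurd rfl hne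
  | cons h p =>
    rw [Walk.cons_isPath_iff] at hp
    exact ⟨_, h, side_walk hT h p (self_mem_side _ _) hp.2⟩

lemma conn_subset_side {W : Type} {T : SimpleGraph W} (hT : T.IsTree) {t y : W} (h : T.Adj t y)
    {S : Set W} (hS : (T.induce S).Connected) (ht : t ∉ S) {s : W} (hs : s ∈ S)
    (hsd : s ∈ Side T t y) : S ⊆ Side T t y := by
  intro b hb
  refine conn_closed hS (p := fun x => x ∈ Side T t y) ?_ hs hb hsd
  intro x x' _ hx' ha hx
  exact side_step' hT h hx ha (by rintro rfl; exact ht hx')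

lemma conn_mem_of_side {W : Type} {T : SimpleGraph W} (hT : T.IsTree) {t y : W} (h : T.Adj t y)
    {S : Set W} (hS : (T.induce S).Connected) (ht : t ∈ S) {s : W} (hs : s ∈ S)
    (hsd : s ∈ Side T t y) : y ∈ S := by
  by_contra hy
  refine notMem_side hT h (conn_closed hS (p := fun x => x ∈ Side T t y) ?_ hs ht hsd)
  intro x x' hxS _ ha hx
  refine side_step hx ha ?_
  intro he
  rw [Sym2.eq_iff] at he
  rcases he with ⟨rfl, -⟩ | ⟨rfl, -⟩
  · exact notMem_side hT h hx
  · exact hy hxS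

lemma path_subset_conn {W : Type} {T : SimpleGraph W} (hT : T.IsTree)
    {S : Set W} (hS : (T.induce S).Connected) {a b : W} (ha : a ∈ S) (hb : b ∈ S)
    (q : T.Walk a b) (hq : q.IsPath) : ∀ x ∈ q.support, x ∈ S := by
  classical
  obtain ⟨w⟩ := hS.preconnected ⟨a, ha⟩ ⟨b, hb⟩
  let w' : T.Walk a b := w.map (Embedding.induce S).toHom
  have hw' : ∀ x ∈ w'.support, x ∈ S := by
    intro x hx
    replace hx : x ∈ (w.map (Embedding.induce S).toHom).support := hx
    rw [Walk.support_map, List.mem_map] at hx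
    obtain ⟨z, -, rfl⟩ := hx
    exact z.2
  have : q = w'.bypass := (hT.existsUnique_path a b).unique hq w'.bypass_isPath
  intro x hx
  rw [this] at hx
  exact hw' x (w'.support_bypass_subset_support hx)

lemma exists_furthest {W V : Type} {T : SimpleGraph W} (hT : T.IsTree) (S : V → Set W)
    (hS : ∀ u, (T.induce (S u)).Connected) (F : Set V) (hF : F.Nonempty) {l t : W}
    (q : T.Walk l t) : (∀ u ∈ F, t ∈ S u) → q.IsPath →
      ∃ v ∈ F, ∀ u ∈ F, ∀ s ∈ q.support, s ∈ S u → s ∈ S v := by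
  induction q with
  | nil =>
    intro hFt _
    obtain ⟨v, hv⟩ := hF
    refine ⟨v, hv, fun u _ s hs _ => ?_⟩
    simp only [Walk.support_nil, List.mem_singleton] at hs
    exact hs ▸ hFt v hv
  | @cons a c t h q ih =>
    intro hFt hq
    by_cases hex : ∃ v ∈ F, a ∈ S v
    · obtain ⟨v, hv, hav⟩ := hex
      exact ⟨v, hv, fun u _ s hs _ => path_subset_conn hT (hS v) hav (hFt v hv) _ hq s hs⟩
    · obtain ⟨v, hv, hmax⟩ := ih hFt ((Walk.cons_isPath_iff _ _).1 hq).1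
      refine ⟨v, hv, fun u hu s hs hsu => ?_⟩
      rw [Walk.support_cons, List.mem_cons] at hs
      rcases hs with rfl | hs
      · exact absurd ⟨u, hu, hsu⟩ hex
      · exact hmax u hu s hs hsu

lemma exists_leaf_beyond {W : Type} [Fintype W] {T : SimpleGraph W} (hT : T.IsTree) {t y s : W}
    (h : T.Adj t y) (hs : s ∈ Side T t y) :
    ∃ (l : W) (q : T.Walk l t), q.IsPath ∧ s ∈ q.support ∧ IsLeaf T l ∧ l ∈ Side T t y := by
  classical
  have hst : s ≠ t := by rintro rfl; exact notMem_side hT h hs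
  let N : Set ℕ := {n | ∃ (l : W) (q : T.Walk l t), q.IsPath ∧ s ∈ q.support ∧ q.length = n}
  have hN : N.Nonempty := by
    obtain ⟨p, hp, -⟩ := hT.existsUnique_path s t
    exact ⟨_, s, p, hp, p.start_mem_support, rfl⟩
  have hB : BddAbove N := by
    refine ⟨Fintype.card W, ?_⟩
    rintro n ⟨l, q, hq, -, rfl⟩
    exact hq.length_lt.le
  obtain ⟨l, q, hq, hsq, hlen⟩ := Nat.sSup_mem hN hB
  refine ⟨l, q, hq, hsq, ?_, ?_⟩
  · have hnn : ¬ q.Nil := by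
      intro hnil
      cases hnil
      simp at hsq
      exact hst hsq
    have : T.neighborSet l = {q.snd} := by
      ext z
      simp only [mem_neighborSet, Set.mem_singleton_iff]
      constructor
      · intro hz
        by_cases hzq : z ∈ q.support
        · exact hT.isAcyclic.eq_snd_of_adj_start hq hz hzq
        · exfalso
          have hmem : (q.length + 1) ∈ N :=
            ⟨z, Walk.cons hz.symm q, hq.cons hzq, by simp [hsq], by simp⟩
          have := le_csSup hB hmem
          omega
      · rintro rfl
        exact q.adj_snd hnn
    rw [IsLeaf, this, Set.ncard_singleton]
  · refine side_walk hT h (q.takeUntil s hsq).reverse hs ?_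
    rw [Walk.support_reverse, List.mem_reverse]
    exact Walk.endpoint_notMem_support_takeUntil hq hsq hst.symm

lemma exists_two_cycle {W : Type} [Fintype W] {T : SimpleGraph W} (hT : T.IsTree) (f : W → W)
    (hf : ∀ w, T.Adj w (f w)) : ∃ w, f (f w) = w := by
  classical
  have hcard := hT.card_edgeFinset
  obtain ⟨a, -, b, -, hab, he⟩ := Finset.exists_ne_map_eq_of_card_lt_of_maps_to
    (s := (Finset.univ : Finset W)) (t := T.edgeFinset) (f := fun w => s(w, f w))
    (by rw [Finset.card_univ]; omega) (by intro w _; simpa using hf w)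
  rw [Sym2.eq_iff] at he
  rcases he with ⟨h, -⟩ | ⟨h1, h2⟩
  · exact absurd h hab
  · exact ⟨a, by rw [h2, ← h1]⟩

/-! ### The main argument -/

section Main

variable {V W : Type} {G : SimpleGraph V} {T : SimpleGraph W}

/-- The leaves on the side of `y` after deleting `ty`. -/
def LeafSide (T : SimpleGraph W) (t y : W) : Set W :=
  {w : W | IsLeaf T w ∧ (T.deleteEdges {s(t, y)}).Reachable y w}

lemma exists_reps [Fintype W] (R : TreeRep G T) {t y : W} (h : T.Adj t y)
    (hB : ∃ u, t ∈ R.S u ∧ y ∈ R.S u) :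
    ∃ A : Set V, A.Finite ∧ A.ncard ≤ (LeafSide T t y).ncard ∧
      (∀ v ∈ A, t ∈ R.S v ∧ y ∈ R.S v) ∧
      ∀ u s, t ∈ R.S u → s ∈ R.S u → s ∈ Side T t y → ∃ v ∈ A, s ∈ R.S v := by
  have hT := R.isTree
  have key : ∀ l : W, ∃ v ∈ {u | t ∈ R.S u ∧ y ∈ R.S u},
      ∀ q : T.Walk l t, q.IsPath → ∀ u ∈ {u | t ∈ R.S u ∧ y ∈ R.S u},
        ∀ s ∈ q.support, s ∈ R.S u → s ∈ R.S v := by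
    intro l
    obtain ⟨q, hq, huq⟩ := hT.existsUnique_path l t
    obtain ⟨v, hv, hmax⟩ := exists_furthest hT R.S R.subtree_connected
      {u | t ∈ R.S u ∧ y ∈ R.S u} hB q (fun u hu => hu.1) hq
    refine ⟨v, hv, fun q' hq' => ?_⟩
    rw [huq q' hq']
    exact hmax
  choose g hg hmax using key
  have hfin : (LeafSide T t y).Finite := Set.toFinite _
  refine ⟨g '' LeafSide T t y, hfin.image g, Set.ncard_image_le hfin, ?_, ?_⟩
  · rintro _ ⟨l, -, rfl⟩
    exact hg l
  · intro u s htu hsu hs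
    obtain ⟨l, q, hq, hsq, hleaf, hl⟩ := exists_leaf_beyond hT h hs
    refine ⟨g l, ⟨l, ⟨hleaf, hl⟩, rfl⟩, hmax l q hq u ⟨htu, ?_⟩ s hsq hsu⟩
    exact conn_mem_of_side hT h (R.subtree_connected u) htu hsu hs

/-- Being adjacent to a vertex lying strictly on one side. -/
lemma adj_side (R : TreeRep G T) {t y : W} (h : T.Adj t y) {x z : V} (hxz : G.Adj x z)
    (hz : R.S z ⊆ Side T t y) : t ∈ R.S x ∨ R.S x ⊆ Side T t y := by
  by_cases ht : t ∈ R.S x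
  · exact Or.inl ht
  · right
    obtain ⟨s, hs1, hs2⟩ := (R.adj_iff x z hxz.ne).1 hxz
    exact conn_subset_side R.isTree h (R.subtree_connected x) ht hs1 (hz hs2)

lemma all_side (R : TreeRep G T) {t y : W} (h : T.Adj t y) {l : List V}
    (hl : l.IsChain G.Adj) (hlt : ∀ x ∈ l, t ∉ R.S x) {z : V} (hz : z ∈ l)
    (hzs : R.S z ⊆ Side T t y) : ∀ x ∈ l, R.S x ⊆ Side T t y := by
  refine chain_all l ?_ hl z hz hzs
  intro x x' hx hx' ha
  constructor
  · intro hs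
    exact (adj_side R h ha.symm hs).resolve_left (hlt x' hx')
  · intro hs
    exact (adj_side R h ha hs).resolve_left (hlt x hx)

/-- A longest path missing the representatives `A` has nothing strictly on the side of `y`
after a vertex of the bag of `t`. -/
lemma no_side (R : TreeRep G T) {t y : W} (h : T.Adj t y) {A : Set V}
    (hA1 : ∀ v ∈ A, t ∈ R.S v ∧ y ∈ R.S v)
    (hA2 : ∀ u s, t ∈ R.S u → s ∈ R.S u → s ∈ Side T t y → ∃ v ∈ A, s ∈ R.S v)
    {X Z : List V} {b : V} (hP : LPList G (X ++ b :: Z)) (hmiss : ∀ v ∈ A, v ∉ X ++ b :: Z)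
    (hb : t ∈ R.S b) {z : V} (hz : z ∈ Z) (hzs : R.S z ⊆ Side T t y) : False := by
  have hT := R.isTree
  have hch := (List.isChain_split.1 hP.1.1).2
  rcases exists_pair (r := G.Adj) (p := fun x => t ∈ R.S x) (q := fun x => R.S x ⊆ Side T t y)
    (fun x z' hxz hz' => adj_side R h hxz hz') hzs Z b hch hz with hq | ⟨U, x, x', U', he, hx, hx'⟩
  · exact notMem_side hT h (hq hb)
  · rw [he] at hP hmiss
    have hadj : G.Adj x x' := by
      have h1 := hP.1.1.right_of_append
      have h2 := (List.isChain_split.1 h1).2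
      exact (List.isChain_cons_cons.1 h2).1
    obtain ⟨s, hs1, hs2⟩ := (R.adj_iff x x' hadj.ne).1 hadj
    obtain ⟨v, hvA, hsv⟩ := hA2 x s hx hs1 (hx' hs2)
    have hvm := hmiss v hvA
    have hvx : G.Adj x v := by
      refine (R.adj_iff x v ?_).2 ⟨s, hs1, hsv⟩
      rintro rfl
      simp at hvm
    have hvx' : G.Adj v x' := by
      refine (R.adj_iff v x' ?_).2 ⟨s, hsv, hs2⟩
      rintro rfl
      simp at hvm
    have := hP.2 ((X ++ U) ++ x :: v :: x' :: U') ⟨?_, ?_⟩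
    · simp at this
    · have h1 : ((X ++ U) ++ x :: x' :: U').IsChain G.Adj := by simpa using hP.1.1
      rw [List.isChain_append_cons_cons] at h1 ⊢
      exact ⟨h1.1, hvx, List.isChain_cons_cons.2 ⟨hvx', h1.2.2⟩⟩
    · have h1 := hP.1.2
      grind

lemma key_step [Fintype W] (R : TreeRep G T) (t : W)
    (hK : ∀ P, LPList G P → ∃ x ∈ P, t ∈ R.S x)
    (hB : ∃ y, T.Adj t y ∧ ∃ u, t ∈ R.S u ∧ y ∈ R.S u) :
    ∃ y, T.Adj t y ∧ ∃ A : Set V, A.Finite ∧ A.ncard ≤ (LeafSide T t y).ncard ∧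
      (∀ v ∈ A, t ∈ R.S v ∧ y ∈ R.S v) ∧ ∀ P, LPList G P → ∃ v ∈ A, v ∈ P := by
  classical
  have hT := R.isTree
  by_contra hcon
  push Not at hcon
  let Y := {y // T.Adj t y ∧ ∃ u, t ∈ R.S u ∧ y ∈ R.S u}
  have key : ∀ y : Y, ∃ (A : Set V) (X Z : List V) (b : V),
      (∀ v ∈ A, t ∈ R.S v ∧ y.1 ∈ R.S v) ∧
      (∀ u s, t ∈ R.S u → s ∈ R.S u → s ∈ Side T t y.1 → ∃ v ∈ A, s ∈ R.S v) ∧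
      LPList G (X ++ b :: Z) ∧ (∀ v ∈ A, v ∉ X ++ b :: Z) ∧ t ∈ R.S b ∧
      ∀ x ∈ X, t ∉ R.S x := by
    rintro ⟨y, hy, hyB⟩
    obtain ⟨A, hAf, hA, hA1, hA2⟩ := exists_reps R hy hyB
    obtain ⟨P, hP, hmiss⟩ := hcon y hy A hAf hA hA1
    obtain ⟨X, b, Z, rfl, hb, hX⟩ := exists_first (fun x => t ∈ R.S x) P (hK P hP)
    exact ⟨A, X, Z, b, hA1, hA2, hP, hmiss, hb, hX⟩
  choose A X Z b hA1 hA2 hP hmiss hb hX using key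
  have : Nonempty Y := by
    obtain ⟨y, hy⟩ := hB
    exact ⟨⟨y, hy⟩⟩
  obtain ⟨y₀, hy₀⟩ := Finite.exists_max (fun y : Y => (X y).length)
  rcases List.eq_nil_or_concat (X y₀) with hnil | ⟨X', a, hXa⟩
  · obtain ⟨u, htu, hyu⟩ := y₀.2.2
    obtain ⟨v, hv, -⟩ := hA2 y₀ u y₀.1 htu hyu (self_mem_side _ _)
    have hPl := hP y₀
    have hm := hmiss y₀ v hv
    rw [hnil, List.nil_append] at hPl hm
    have hadj : G.Adj v (b y₀) := by
      refine (R.adj_iff _ _ ?_).2 ⟨t, (hA1 y₀ v hv).1, hb y₀⟩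
      intro he
      simp [he] at hm
    have := hPl.2 (v :: b y₀ :: Z y₀)
      ⟨List.isChain_cons_cons.2 ⟨hadj, hPl.1.1⟩, List.nodup_cons.2 ⟨hm, hPl.1.2⟩⟩
    simp at this
  · have hPl := hP y₀
    have hXt := hX y₀
    rw [List.concat_eq_append] at hXa
    rw [hXa, List.append_assoc, List.singleton_append] at hPl
    have hab : G.Adj a (b y₀) := by
      have h2 := (List.isChain_split.1 hPl.1.1).2
      exact (List.isChain_cons_cons.1 h2).1
    have hta : t ∉ R.S a := hXt a (by simp [hXa])
    obtain ⟨s, hsa, hsb⟩ := (R.adj_iff _ _ hab.ne).1 hab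
    obtain ⟨y₁, hy₁, hs⟩ := exists_side hT (t := t) (w := s) (by rintro rfl; exact hta hsa)
    let y₁' : Y := ⟨y₁, hy₁, b y₀, hb y₀,
      conn_mem_of_side hT hy₁ (R.subtree_connected _) (hb y₀) hsb hs⟩
    have haside : R.S a ⊆ Side T t y₁ :=
      conn_subset_side hT hy₁ (R.subtree_connected a) hta hsa hs
    have hXch : (X y₀).IsChain G.Adj := (hP y₀).1.1.left_of_append
    have hXside := all_side R hy₁ hXch hXt (by simp [hXa]) haside
    obtain ⟨v, hvA, hsv⟩ := hA2 y₁' (b y₀) s (hb y₀) hsb hs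
    have hvt := (hA1 y₁' v hvA).1
    have hvm := hmiss y₁' v hvA
    have hva : G.Adj a v :=
      (R.adj_iff _ _ (by rintro rfl; exact hta hvt)).2 ⟨s, hsa, hsv⟩
    have hvb : G.Adj v (b y₁') := by
      refine (R.adj_iff _ _ ?_).2 ⟨t, hvt, hb y₁'⟩
      intro he
      simp [he] at hvm
    have hdis : ∀ x ∈ X y₀, x ∉ Z y₁' := by
      intro x hx hz
      exact no_side R hy₁ (hA1 y₁') (hA2 y₁') (hP y₁') (hmiss y₁') (hb y₁') hz (hXside x hx)
    have := (hP y₁').2 (X y₀ ++ v :: b y₁' :: Z y₁') ⟨?_, ?_⟩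
    · have h1 := hy₀ y₁'
      simp at this h1
      omega
    · have h1 := (List.isChain_split.1 (hP y₁').1.1).2
      have h2 : (X' ++ a :: v :: b y₁' :: Z y₁').IsChain G.Adj := by
        rw [List.isChain_append_cons_cons]
        exact ⟨(List.isChain_split.1 hPl.1.1).1, hva, List.isChain_cons_cons.2 ⟨hvb, h1⟩⟩
      rw [hXa]
      simpa using h2
    · have h1 : (X y₀).Nodup := (List.nodup_append.1 (hP y₀).1.2).1
      have h2 : (b y₁' :: Z y₁').Nodup := (List.nodup_append.1 (hP y₁').1.2).2.1
      have h3 : v ∉ b y₁' :: Z y₁' := fun h => hvm (List.mem_append_right _ h)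
      have h4 : v ∉ X y₀ := fun h => hXt v h hvt
      have h5 : b y₁' ∉ X y₀ := fun h => hXt _ h (hb y₁')
      rw [List.nodup_append]
      refine ⟨h1, List.nodup_cons.2 ⟨h3, h2⟩, ?_⟩
      intro x hx z hz he
      subst he
      rcases List.mem_cons.1 hz with rfl | hz
      · exact h4 hx
      · rcases List.mem_cons.1 hz with rfl | hz
        · exact h5 hx
        · exact hdis x hx hz

lemma complete_of_no_edge (hG : G.Connected) (R : TreeRep G T) (t : W) (u₀ : V)
    (hu₀ : t ∈ R.S u₀) (hB : ¬ ∃ y, T.Adj t y ∧ ∃ u, t ∈ R.S u ∧ y ∈ R.S u) : G = ⊤ := by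
  have hT := R.isTree
  have hw : ∀ (a b : V) (_ : G.Walk a b), t ∈ R.S a → t ∈ R.S b := by
    intro a b w
    induction w with
    | nil => exact id
    | @cons a c b h _ ih =>
      intro ha
      apply ih
      by_contra hc
      obtain ⟨s, hsa, hsc⟩ := (R.adj_iff _ _ h.ne).1 h
      obtain ⟨y, hy, hs⟩ := exists_side hT (t := t) (w := s) (by rintro rfl; exact hc hsc)
      exact hB ⟨y, hy, a, ha, conn_mem_of_side hT hy (R.subtree_connected _) ha hsa hs⟩
  have hall : ∀ b, t ∈ R.S b := by
    intro b
    obtain ⟨w⟩ := hG.preconnected u₀ b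
    exact hw _ _ w hu₀
  ext a b
  rw [top_adj]
  exact ⟨fun h => h.ne, fun h => (R.adj_iff a b h).2 ⟨t, hall a, hall b⟩⟩

lemma lpt_le_of_transversal {A : Set V} (hA : A.Finite)
    (h : ∀ P, LPList G P → ∃ v ∈ A, v ∈ P) : lpt G ≤ A.ncard :=
  Nat.sInf_le ⟨A, hA, rfl, fun _ _ _ hp => h _ (lpList_of_isLongestPath hp)⟩

lemma exists_lpList [Fintype V] (G : SimpleGraph V) : ∃ P, LPList G P := by
  let N : Set ℕ := {n | ∃ l, PList G l ∧ l.length = n}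
  have hN : N.Nonempty := ⟨0, [], ⟨List.isChain_nil, List.nodup_nil⟩, rfl⟩
  have hB : BddAbove N := by
    refine ⟨Fintype.card V, ?_⟩
    rintro n ⟨l, hl, rfl⟩
    exact hl.2.length_le_card
  obtain ⟨l, hl, hlen⟩ := Nat.sSup_mem hN hB
  refine ⟨l, hl, fun l' hl' => ?_⟩
  rw [hlen]
  exact le_csSup hB ⟨l', hl', rfl⟩

lemma le_mf [Fintype W] {t y : W} (h : T.Adj t y) {k : ℕ}
    (h1 : k ≤ (LeafSide T t y).ncard) (h2 : k ≤ (LeafSide T y t).ncard) : k ≤ mf T := by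
  have hB : BddAbove {k : ℕ | ∃ u v : W, T.Adj u v ∧
    k = min {w : W | IsLeaf T w ∧ (T.deleteEdges {s(u, v)}).Reachable u w}.ncard
            {w : W | IsLeaf T w ∧ (T.deleteEdges {s(u, v)}).Reachable v w}.ncard} := by
    refine ⟨Nat.card W, ?_⟩
    rintro n ⟨u, v, -, rfl⟩
    exact (min_le_left _ _).trans (Set.ncard_le_card _)
  refine le_trans (le_min ?_ h1) (le_csSup hB ⟨t, y, h, rfl⟩)
  rw [LeafSide, Sym2.eq_swap] at h2
  exact h2

end Main

/-- If `G` is a connected chordal graph with minimal tree representation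
`T`, then either `G` is complete, or `lpt(G) ≤ mf(T)`. -/
theorem leafage_bound {V W : Type} [Fintype V] [Fintype W] (G : SimpleGraph V)
    (T : SimpleGraph W) (hconn : G.Connected) (hchordal : IsChordal G)
    (R : TreeRep G T) (hmin : R.IsMinimal) :
    G = ⊤ ∨ lpt G ≤ mf T := by
  have hT := R.isTree
  have hne : Nonempty V := hconn.nonempty
  by_cases hcomp : G = ⊤
  · exact Or.inl hcomp
  right
  obtain ⟨P₀, hP₀⟩ := exists_lpList G
  let K : W → Prop := fun t => ∀ P, LPList G P → ∃ x ∈ P, t ∈ R.S x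
  have hstep : ∀ t : W, ∃ y, T.Adj t y ∧
      (K t → ∃ A : Set V, A.Finite ∧ A.ncard ≤ (LeafSide T t y).ncard ∧
        (∀ v ∈ A, t ∈ R.S v ∧ y ∈ R.S v) ∧ ∀ P, LPList G P → ∃ v ∈ A, v ∈ P) ∧
      (¬ K t → ∃ P, LPList G P ∧ ∀ x ∈ P, R.S x ⊆ Side T t y) := by
    intro t
    by_cases hK : K t
    · obtain ⟨u, -, hu⟩ := hK P₀ hP₀
      have hB : ∃ y, T.Adj t y ∧ ∃ u, t ∈ R.S u ∧ y ∈ R.S u := by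
        by_contra hB
        exact hcomp (complete_of_no_edge hconn R t u hu hB)
      obtain ⟨y, hy, hA⟩ := key_step R t hK hB
      exact ⟨y, hy, fun _ => hA, fun h => absurd hK h⟩
    · have hK' := hK
      simp only [K] at hK'
      push Not at hK'
      obtain ⟨P, hP, hmiss⟩ := hK'
      obtain ⟨z, hz⟩ := List.exists_mem_of_ne_nil _ hP.ne_nil
      obtain ⟨s, hs⟩ := (R.subtree_connected z).nonempty
      obtain ⟨y, hy, hsy⟩ := exists_side hT (t := t) (w := s)
        (by rintro rfl; exact hmiss z hz hs)
      refine ⟨y, hy, fun h => absurd h hK, fun _ => ⟨P, hP, ?_⟩⟩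
      exact all_side R hy hP.1.1 hmiss hz
        (conn_subset_side hT hy (R.subtree_connected z) (hmiss z hz) hs hsy)
  choose f hadj hfK hfN using hstep
  have hKK : ∀ t, K t → K (f t) := by
    intro t ht P hP
    obtain ⟨A, -, -, hA1, hA2⟩ := hfK t ht
    obtain ⟨v, hv, hvP⟩ := hA2 P hP
    exact ⟨v, hvP, (hA1 v hv).2⟩
  obtain ⟨t, ht⟩ := exists_two_cycle hT f hadj
  by_cases hK : K t
  · obtain ⟨A, hAf, hA, -, hAt⟩ := hfK t hK
    obtain ⟨A', hAf', hA', -, hAt'⟩ := hfK (f t) (hKK t hK)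
    rw [ht] at hA'
    exact le_mf (hadj t) ((lpt_le_of_transversal hAf hAt).trans hA)
      ((lpt_le_of_transversal hAf' hAt').trans hA')
  · have hK' : ¬ K (f t) := fun h => hK (ht ▸ hKK _ h)
    obtain ⟨P, hP, hPs⟩ := hfN t hK
    obtain ⟨Q, hQ, hQs⟩ := hfN (f t) hK'
    rw [ht] at hQs
    obtain ⟨x, hxP, hxQ⟩ := longest_meet hconn hP hQ
    obtain ⟨s, hs⟩ := (R.subtree_connected x).nonempty
    exact (side_disjoint hT (hadj t) (hPs x hxP hs) (hQs x hxQ hs)).elim
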